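/- Let K be a number field with ring of integers R, and let L/K be a quadratic field extension. Let J be a full lattice in L with respect to R, i.e., a finitely generated R-submodule of L spanning L as a K-vector space. Fix x₀ ∈ L \ K and set 𝔞 := {k ∈ K : k·x₀ ∈ J + K}, a fractional ideal of R. Then J is free as an R-module if and only if the fractional ideal 𝔞 · (J ∩ K) of R is principal. -/

import Mathlib

open NumberField

/-!
Let `B = J ∩ K`. The `x₀`-coordinate maps `J` onto `𝔞` with kernel `B`. The ideal `𝔞` is invertible
if `J` is finitely generated, and also if `𝔞B` is principal; it is then projective, so
`J ≃ 𝔞 × B`. A basis of `𝔞 × B` consists of two vectors whose determinant generates `𝔞B`.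
Conversely, choosing `x, y ∈ K` with `x𝔞 + yB = R` gives Steinitz's isomorphism
`𝔞 × B ≃ R × 𝔞B`, whose right-hand side is free once `𝔞B` is principal.
-/

open Module Submodule

open scoped nonZeroDivisors Pointwise

section SubmodulesOfAlgebra

variable {R S : Type*} [CommRing R] [CommRing S] [Algebra R S] {A B : Submodule R S}

theorem mul_eq_span_det_of_basis_prod (β : Basis (Fin 2) R (A × B)) :
    A * B = R ∙ ((β 0).1 * (β 1).2 - (β 1).1 * (β 0).2 : S) := by
  refine le_antisymm (mul_le.2 fun a ha b hb ↦ ?_) ?_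
  · have repr_fst (p : A × B) :
        (p.1 : S) = β.repr p 0 • ((β 0).1 : S) + β.repr p 1 • ((β 1).1 : S) := by
      conv_lhs => rw [← β.sum_repr p, Fin.sum_univ_two]
      rfl
    have repr_snd (p : A × B) :
        (p.2 : S) = β.repr p 0 • ((β 0).2 : S) + β.repr p 1 • ((β 1).2 : S) := by
      conv_lhs => rw [← β.sum_repr p, Fin.sum_univ_two]
      rfl
    let p : A × B := (⟨a, ha⟩, 0)
    let q : A × B := (0, ⟨b, hb⟩)
    refine mem_span_singleton.2 ⟨β.repr p 0 * β.repr q 1 - β.repr p 1 * β.repr q 0, ?_⟩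
    have mul_eq_det : a * b = p.1 * q.2 - q.1 * p.2 := by simp [p, q]
    rw [mul_eq_det, repr_fst p, repr_fst q, repr_snd p, repr_snd q]
    simp only [Algebra.smul_def, map_sub, map_mul]
    ring
  · exact (span_singleton_le_iff_mem _ _).2 <|
      sub_mem (mul_mem_mul (β 0).1.2 (β 1).2.2) (mul_mem_mul (β 1).1.2 (β 0).2.2)

theorem nonempty_prod_equiv_one_prod_mul {x y : S} (h : x • A ⊔ y • B = 1) :
    Nonempty ((A × B) ≃ₗ[R] (1 : Submodule R S) × ↥(A * B)) := by
  have x_mul_mem {a : S} (ha : a ∈ A) : x * a ∈ (1 : Submodule R S) :=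
    h.le (mem_sup_left (smul_mem_pointwise_smul a x A ha))
  have y_mul_mem {b : S} (hb : b ∈ B) : y * b ∈ (1 : Submodule R S) :=
    h.le (mem_sup_right (smul_mem_pointwise_smul b y B hb))
  have one_mul_mem {C : Submodule R S} {r c : S} (hr : r ∈ (1 : Submodule R S)) (hc : c ∈ C) :
      r * c ∈ C := by
    simpa using mul_mem_mul hr hc
  obtain ⟨a₀, ha₀, b₀, hb₀, hone⟩ : ∃ a₀ ∈ A, ∃ b₀ ∈ B, x * a₀ + y * b₀ = 1 := by
    simpa [mem_sup, mem_smul_pointwise_iff_exists] using h.ge (one_le.1 le_rfl)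
  have y_mul_mem_left {c : S} (hc : c ∈ A * B) : y * c ∈ A :=
    Submodule.mul_induction_on hc
      (fun a ha b hb ↦ by
        simpa only [mul_left_comm, mul_comm] using one_mul_mem (y_mul_mem hb) ha)
      fun c d hc hd ↦ mul_add y c d ▸ add_mem hc hd
  have x_mul_mem_right {c : S} (hc : c ∈ A * B) : x * c ∈ B :=
    Submodule.mul_induction_on hc
      (fun a ha b hb ↦ mul_assoc x a b ▸ one_mul_mem (x_mul_mem ha) hb)
      fun c d hc hd ↦ mul_add x c d ▸ add_mem hc hd
  -- The matrix with rows `(x, y)` and `(b₀, -a₀)` has determinant `-1`.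
  exact ⟨{
    toFun p := (⟨x * p.1 + y * p.2, add_mem (x_mul_mem p.1.2) (y_mul_mem p.2.2)⟩,
      ⟨p.1 * b₀ - a₀ * p.2, sub_mem (mul_mem_mul p.1.2 hb₀) (mul_mem_mul ha₀ p.2.2)⟩)
    invFun q := (⟨q.1 * a₀ + y * q.2, add_mem (one_mul_mem q.1.2 ha₀) (y_mul_mem_left q.2.2)⟩,
      ⟨q.1 * b₀ - x * q.2, sub_mem (one_mul_mem q.1.2 hb₀) (x_mul_mem_right q.2.2)⟩)
    map_add' p q := by ext <;> simp <;> ring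
    map_smul' r p := by ext <;> simp [smul_sub]
    left_inv p := by
      ext
      · linear_combination (p.1 : S) * hone
      · linear_combination (p.2 : S) * hone
    right_inv q := by
      ext
      · linear_combination (q.1 : S) * hone
      · linear_combination (q.2 : S) * hone }⟩

end SubmodulesOfAlgebra

theorem free_span_singleton (R : Type*) {M : Type*} [Ring R] [IsDomain R] [AddCommGroup M]
    [Module R M] [IsTorsionFree R M] (x : M) : Free R (R ∙ x) := by
  obtain rfl | hx := eq_or_ne x 0
  · rw [span_zero_singleton]
    infer_instance
  · exact .of_equiv (LinearEquiv.toSpanNonzeroSingleton R M x hx)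

section FractionField

variable {R K : Type*} [CommRing R] [Field K] [Algebra R K]

theorem isUnit_of_isPrincipal_of_ne_bot {C : Submodule R K} (hC : C.IsPrincipal) (h0 : C ≠ ⊥) :
    IsUnit C := by
  obtain ⟨d, rfl⟩ := hC
  exact (IsUnit.mk0 d fun hd ↦ h0 (by simp [hd])).map (spanSingleton R)

variable [IsDedekindDomain R] [IsFractionRing R K] {A B : Submodule R K}

theorem isUnit_of_fg_of_ne_bot (hfg : A.FG) (hA : A ≠ ⊥) : IsUnit A := by
  let I : FractionalIdeal R⁰ K := ⟨A, FractionalIdeal.isFractional_of_fg hfg⟩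
  have hI : I ≠ 0 := fun h ↦ hA (FractionalIdeal.coeToSubmodule_eq_bot.2 h)
  exact hI.isUnit.map (FractionalIdeal.coeSubmoduleHom R⁰ K)

theorem exists_spanSingleton_mul_add_spanSingleton_mul_eq_one {I J : FractionalIdeal R⁰ K}
    (hI : I ≠ 0) (hJ : J ≠ 0) :
    ∃ x y : K,
      FractionalIdeal.spanSingleton R⁰ x * I + FractionalIdeal.spanSingleton R⁰ y * J = 1 := by
  obtain ⟨x, hx⟩ := IsDedekindDomain.exists_add_spanSingleton_mul_eq
    (a := (J.num : FractionalIdeal R⁰ K)) (c := 1) FractionalIdeal.coeIdeal_le_one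
    (FractionalIdeal.coeIdeal_ne_zero.2 (FractionalIdeal.num_eq_zero_iff.not.2 hJ)) hI
  exact ⟨x, _, by rw [FractionalIdeal.den_mul_self_eq_num', add_comm, hx]⟩

theorem exists_smul_sup_smul_eq_one (hA : IsUnit A) (hB : IsUnit B) :
    ∃ x y : K, x • A ⊔ y • B = 1 := by
  obtain ⟨I, rfl⟩ : ∃ I : FractionalIdeal R⁰ K, I = A :=
    ⟨⟨A, hA.unit.submodule_isFractional⟩, rfl⟩
  obtain ⟨J, rfl⟩ : ∃ J : FractionalIdeal R⁰ K, J = B :=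
    ⟨⟨B, hB.unit.submodule_isFractional⟩, rfl⟩
  have hI : I ≠ 0 := FractionalIdeal.coeToSubmodule_ne_bot.1 hA.ne_zero
  have hJ : J ≠ 0 := FractionalIdeal.coeToSubmodule_ne_bot.1 hB.ne_zero
  obtain ⟨x, y, h⟩ := exists_spanSingleton_mul_add_spanSingleton_mul_eq_one hI hJ
  exact ⟨x, y, by simpa [span_singleton_mul] using congr(($h : Submodule R K))⟩

theorem free_prod_of_isPrincipal_mul (hA : IsUnit A) (hB : IsUnit B)
    (hAB : (A * B).IsPrincipal) : Free R (A × B) := by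
  obtain ⟨x, y, h⟩ := exists_smul_sup_smul_eq_one hA hB
  obtain ⟨e⟩ := nonempty_prod_equiv_one_prod_mul h
  obtain ⟨d, hd⟩ := hAB
  have := free_span_singleton R (1 : K)
  have := free_span_singleton R d
  rw [one_eq_span, hd] at e
  exact .of_equiv e.symm

end FractionField

section FullSubmodule

variable {R K V : Type*} [CommRing R] [CommRing K] [Algebra R K] [AddCommGroup V] [Module R V]
  [Module K V] [IsScalarTower R K V] {J : Submodule R V}

variable (K) in
/-- The coefficient module `{k ∈ K : k • v ∈ N}` of `N` along `v`. For `V = L` this is `𝔞` when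
`N = J + K` and `v = x₀`, and `J ∩ K` when `N = J` and `v = 1`. -/
def coeffSubmodule (N : Submodule R V) (v : V) : Submodule R K :=
  N.comap ((LinearMap.toSpanSingleton K V v).restrictScalars R)

variable (K) in
theorem isLocalizedModule_subtype (S : Submonoid R) [IsLocalization S K]
    (hJ : span K (J : Set V) = ⊤) : IsLocalizedModule S J.subtype where
  map_units := (isLocalizedModule_id S V K).map_units
  surj v := by
    obtain ⟨s, hs⟩ := multiple_mem_span_of_mem_localization_span S K (J : Set V) v
      (hJ ▸ mem_top)
    exact ⟨⟨⟨s • v, by simpa using hs⟩, s⟩, rfl⟩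
  exists_of_eq h := ⟨1, by simpa using h⟩

theorem map_restrictScalars_ne_bot {W : Type*} [AddCommGroup W] [Module R W] [Module K W]
    [IsScalarTower R K W] (hJ : span K (J : Set V) = ⊤) {f : V →ₗ[K] W} (hf : f ≠ 0) :
    J.map (f.restrictScalars R) ≠ ⊥ :=
  fun h ↦ hf <| LinearMap.ext_on hJ fun _ hj ↦ (mem_bot R).1 (h ▸ mem_map_of_mem hj)

variable [IsFractionRing R K]

theorem finrank_eq_of_span_eq_top (hJ : span K (J : Set V) = ⊤) :
    finrank R J = finrank K V := by
  have := isLocalizedModule_subtype K R⁰ hJ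
  rw [← IsLocalizedModule.finrank_eq R⁰ J.subtype le_rfl, IsLocalization.finrank_eq K R⁰ le_rfl]

theorem coeffSubmodule_ne_bot [Nontrivial K] (hJ : span K (J : Set V) = ⊤) (v : V) :
    coeffSubmodule K J v ≠ ⊥ := by
  have := isLocalizedModule_subtype K R⁰ hJ
  obtain ⟨⟨j, s⟩, hs⟩ := IsLocalizedModule.surj R⁰ J.subtype v
  refine (Submodule.ne_bot_iff _).2 ⟨algebraMap R K s, ?_, ?_⟩
  · simpa [coeffSubmodule] using hs ▸ j.2
  · exact (IsLocalization.map_units K s).ne_zero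

end FullSubmodule

section Basis

variable {R K V : Type*} [CommRing R] [CommRing K] [Algebra R K] [AddCommGroup V] [Module R V]
  [Module K V] [IsScalarTower R K V] (b : Basis (Fin 2) K V) (J : Submodule R V)

theorem repr_zero_smul_add_repr_one_smul (v : V) :
    b.repr v 0 • b 0 + b.repr v 1 • b 1 = v := by
  rw [← Fin.sum_univ_two fun i ↦ b.repr v i • b i, b.sum_repr]

theorem coeffSubmodule_sup_span_eq_map_coord :
    coeffSubmodule K (J ⊔ (K ∙ b 0).restrictScalars R) (b 1) =
      J.map ((b.coord 1).restrictScalars R) := by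
  ext k
  simp only [coeffSubmodule, mem_comap, LinearMap.restrictScalars_apply,
    LinearMap.toSpanSingleton_apply, mem_sup, restrictScalars_mem, mem_span_singleton, mem_map]
  constructor
  · rintro ⟨j, hj, _, ⟨c, rfl⟩, h⟩
    exact ⟨j, hj, by simpa using congr(b.coord 1 $h)⟩
  · rintro ⟨j, hj, rfl⟩
    refine ⟨j, hj, _, ⟨-b.repr j 0, rfl⟩, ?_⟩
    nth_rw 1 [← repr_zero_smul_add_repr_one_smul b j]
    simp

theorem nonempty_equiv_map_coord_prod_coeffSubmodule
    [Projective R (J.map ((b.coord 1).restrictScalars R))] :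
    Nonempty (J ≃ₗ[R] J.map ((b.coord 1).restrictScalars R) × coeffSubmodule K J (b 0)) := by
  let f : coeffSubmodule K J (b 0) →ₗ[R] J :=
    ((LinearMap.toSpanSingleton K V (b 0)).restrictScalars R).restrict fun _ hk ↦ hk
  let g := ((b.coord 1).restrictScalars R).submoduleMap J
  have hf : Function.Injective f := fun k l h ↦ by
    have hcoord : b.coord 0 ((k : K) • b 0) = b.coord 0 ((l : K) • b 0) := congr(b.coord 0 $h)
    exact Subtype.ext (by simpa using hcoord)
  have hfg : Function.Exact f g := by
    refine fun j ↦ ⟨fun hj ↦ ?_, ?_⟩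
    · have hcoord : b.repr j 1 = 0 := congr(($hj : K))
      have hrepr : b.repr j 0 • b 0 = j := by
        simpa [hcoord] using repr_zero_smul_add_repr_one_smul b (j : V)
      have hmem : b.repr j 0 • b 0 ∈ J := by
        rw [hrepr]
        exact j.2
      exact ⟨⟨b.repr j 0, hmem⟩, Subtype.ext hrepr⟩
    · rintro ⟨k, rfl⟩
      exact Subtype.ext (show b.repr ((k : K) • b 0) 1 = 0 by simp)
  obtain ⟨s, hs⟩ := projective_lifting_property g .id (LinearMap.submoduleMap_surjective _ J)
  exact ⟨(hfg.splitSurjectiveEquiv hf ⟨s, hs⟩).1 ≪≫ₗ .prodComm R _ _⟩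

end Basis

section DedekindDomain

variable {R K V : Type*} [CommRing R] [IsDedekindDomain R] [Field K] [Algebra R K]
  [IsFractionRing R K] [AddCommGroup V] [Module R V] [Module K V] [IsScalarTower R K V]
  (b : Basis (Fin 2) K V) {J : Submodule R V}

theorem free_iff_isPrincipal_map_coord_mul_coeffSubmodule (hJ : span K (J : Set V) = ⊤) :
    Free R J ↔
      (J.map ((b.coord 1).restrictScalars R) * coeffSubmodule K J (b 0)).IsPrincipal := by
  have hcoord : b.coord 1 ≠ 0 := fun h ↦ by simpa using congr($h (b 1))
  have hA := map_restrictScalars_ne_bot hJ hcoord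
  have hB := coeffSubmodule_ne_bot hJ (b 0)
  constructor
  · intro _
    have hrank : finrank R J = 2 := by
      rw [finrank_eq_of_span_eq_top hJ, finrank_eq_card_basis b, Fintype.card_fin]
    have := finite_of_finrank_pos (hrank ▸ two_pos)
    have := projective_of_isUnit (isUnit_of_fg_of_ne_bot (.map _ (Module.Finite.iff_fg.1 this)) hA)
    obtain ⟨e⟩ := nonempty_equiv_map_coord_prod_coeffSubmodule b J
    exact ⟨_, mul_eq_span_det_of_basis_prod ((finBasisOfFinrankEq R J hrank).map e)⟩
  · intro hAB
    have hunit := isUnit_of_isPrincipal_of_ne_bot hAB (mul_ne_zero hA hB)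
    have hAunit := isUnit_of_mul_isUnit_left hunit
    have := projective_of_isUnit hAunit
    obtain ⟨e⟩ := nonempty_equiv_map_coord_prod_coeffSubmodule b J
    have := free_prod_of_isPrincipal_mul hAunit (isUnit_of_mul_isUnit_right hunit) hAB
    exact .of_equiv e.symm

theorem lattice_free_iff_principal_general (hJ : span K (J : Set V) = ⊤) :
    Free R J ↔
      (coeffSubmodule K (J ⊔ (K ∙ b 0).restrictScalars R) (b 1) *
        coeffSubmodule K J (b 0)).IsPrincipal := by
  rw [coeffSubmodule_sup_span_eq_map_coord, free_iff_isPrincipal_map_coord_mul_coeffSubmodule b hJ]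

end DedekindDomain

theorem exists_basis_fin_two_one_eq_of_notMem_range {K L : Type*} [Field K] [Ring L]
    [Nontrivial L] [Algebra K L] (hquad : finrank K L = 2) {x : L}
    (hx : x ∉ (algebraMap K L).range) :
    ∃ b : Basis (Fin 2) K L, b 0 = 1 ∧ b 1 = x := by
  have hli : LinearIndependent K ![1, x] :=
    (LinearIndependent.pair_iff' one_ne_zero).2 fun k hk ↦
      hx ⟨k, by rw [Algebra.algebraMap_eq_smul_one, hk]⟩
  exact ⟨basisOfLinearIndependentOfCardEqFinrank hli (by simp [hquad]), by simp, by simp⟩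

/-- Let `K` be a number field with ring of integers `R = 𝓞 K`, and
`L/K` a quadratic field extension. Let `J` be a full lattice in `L` with respect to
`R` (a finitely generated `R`-submodule of `L` spanning `L` over `K`). Fix
`x₀ ∈ L \ K` and set `𝔞 := {k ∈ K : k·x₀ ∈ J + K}`. Then `J` is free as an `R`-module
if and only if the fractional ideal `𝔞 · (J ∩ K)` of `R` is principal. -/
theorem lattice_free_iff_principal
    (K : Type*) [Field K] [NumberField K]
    (L : Type*) [Field L] [Algebra K L]
    [Algebra (𝓞 K) L] [IsScalarTower (𝓞 K) K L]
    (hquad : Module.finrank K L = 2)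
    (J : Submodule (𝓞 K) L) (hfg : J.FG)
    (hfull : Submodule.span K (J : Set L) = ⊤)
    (x₀ : L) (hx₀ : x₀ ∉ (algebraMap K L).range) :
    Module.Free (𝓞 K) J ↔
      Submodule.IsPrincipal
        ((Submodule.comap ((LinearMap.toSpanSingleton K L x₀).restrictScalars (𝓞 K))
            (J ⊔ Submodule.restrictScalars (𝓞 K) (LinearMap.range (Algebra.linearMap K L)))) *
          (Submodule.comap ((Algebra.linearMap K L).restrictScalars (𝓞 K)) J)) := by
  obtain ⟨b, hb0, hb1⟩ := exists_basis_fin_two_one_eq_of_notMem_range hquad hx₀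
  rw [← LinearMap.toSpanSingleton_one_eq_algebraLinearMap, LinearMap.range_toSpanSingleton,
    ← hb0, ← hb1]
  exact lattice_free_iff_principal_general b hfull
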